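/- Let X be a topological space and let A and B be irreducible subsets of X with X = A ∪ B. If the intersection C := A ∩ B is nonempty and is open both in the subspace topology of A and in the subspace topology of B, then X is an irreducible topological space. -/

import Mathlib

/-!
Nonempty relatively open subsets of `B` are dense in `B`, so `B` lies in the closure of `A` as soon
as `A` contains one of them. Then `A` is dense in `A ∪ B`, and irreducibility passes from a dense
subset to the whole.
-/

section

variable {X : Type*} [TopologicalSpace X] {A B S T : Set X}

theorem isIrreducible_of_subset_of_subset_closure (hS : IsIrreducible S) (hST : S ⊆ T)
    (hTS : T ⊆ closure S) : IsIrreducible T := by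
  have closure_eq : closure T = closure S :=
    (closure_minimal hTS isClosed_closure).antisymm (closure_mono hST)
  rw [← isIrreducible_iff_closure, closure_eq]
  exact hS.closure

theorem subset_closure_of_nonempty_interior_preimage_val (hB : IsPreirreducible B)
    (hAB : (interior ((Subtype.val : B → X) ⁻¹' A)).Nonempty) : B ⊆ closure A := by
  have : PreirreducibleSpace B := Subtype.preirreducibleSpace hB
  have preimage_dense : Dense ((Subtype.val : B → X) ⁻¹' A) :=
    (isOpen_interior.dense hAB).mono interior_subset
  exact (Subtype.dense_iff.mp preimage_dense).trans (closure_mono (Set.image_preimage_subset _ _))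

theorem union_irreducible_of_inter_open_general (hA : IsPreirreducible A)
    (hB : IsPreirreducible B) (hAB : (interior ((Subtype.val : B → X) ⁻¹' A)).Nonempty) :
    IsIrreducible (A ∪ B) := by
  have A_nonempty : A.Nonempty :=
    Set.nonempty_of_nonempty_preimage (hAB.mono interior_subset)
  have B_subset : B ⊆ closure A := subset_closure_of_nonempty_interior_preimage_val hB hAB
  exact isIrreducible_of_subset_of_subset_closure ⟨A_nonempty, hA⟩ Set.subset_union_left
    (Set.union_subset subset_closure B_subset)

end

/-- Lemma 7.2: if a topological space `X` is the union of two irreducible subsets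
`A` and `B` whose intersection is nonempty and open in both subspace topologies,
then `X` is irreducible. -/
theorem union_irreducible_of_inter_open {X : Type*} [TopologicalSpace X] (A B : Set X)
    (hA : IsIrreducible A) (hB : IsIrreducible B) (hcover : A ∪ B = Set.univ)
    (hne : (A ∩ B).Nonempty)
    (hopenA : IsOpen ((Subtype.val : A → X) ⁻¹' (A ∩ B)))
    (hopenB : IsOpen ((Subtype.val : B → X) ⁻¹' (A ∩ B))) :
    IrreducibleSpace X := by
  obtain ⟨x, hxA, hxB⟩ := hne
  rw [irreducibleSpace_def, Set.top_eq_univ, ← hcover]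
  exact union_irreducible_of_inter_open_general hA.2 hB.2
    ⟨⟨x, hxB⟩, interior_maximal (fun _ hy ↦ hy.1) hopenB ⟨hxA, hxB⟩⟩
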